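/- arXiv:1004.0078 — 9 statements merged into one kernel-verified Lean document; each statement's English description precedes it below -/
import Mathlib

section
/- Let n ≥ 2 and let f : ℂ² → ℂ be given by f(x,y) = x^{n-1} + x y² + y. If (x,y) ∈ ℂ² is a critical point of f, then x ≠ 0 and the critical value is f(x,y) = -(n/(n-1))·(1/(4x)). -/
/-- For `n ≥ 2` and `f(x,y) = x^(n-1) + x*y^2 + y` on `ℂ²`, if `(x,y)` is a critical
point of `f` (both partial derivatives `(n-1)x^(n-2) + y^2` and `2xy + 1` vanish),
then `x ≠ 0` and the critical value is `f(x,y) = -(n/(n-1)) * (1/(4x))`. -/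
theorem critical_values_of_Dn_perturbation (n : ℕ) (hn : 2 ≤ n) (x y : ℂ)
    (hcrit : (n - 1 : ℂ) * x ^ (n - 2) + y ^ 2 = 0 ∧ 2 * x * y + 1 = 0) :
    x ≠ 0 ∧ x ^ (n - 1) + x * y ^ 2 + y = -((n : ℂ) / (n - 1 : ℂ)) * (1 / (4 * x)) := by
  obtain ⟨h1, h2⟩ := hcrit
  have hx : x ≠ 0 := by
    rintro rfl
    simp at h2
  refine ⟨hx, ?_⟩
  obtain ⟨m, rfl⟩ := Nat.exists_eq_add_of_le' hn
  have e1 : m + 2 - 1 = m + 1 := by omega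
  have e2 : m + 2 - 2 = m := by omega
  rw [e2] at h1
  rw [e1, pow_succ]
  have hc : ((m + 2 : ℕ) : ℂ) - 1 = (m : ℂ) + 1 := by push_cast; ring
  have hm : (m : ℂ) + 1 ≠ 0 := Nat.cast_add_one_ne_zero m
  rw [hc] at h1 ⊢
  have key : (x ^ m * x + x * y ^ 2 + y) * (((m : ℂ) + 1) * (4 * x)) = -((m : ℂ) + 2) := by
    linear_combination 4 * x ^ 2 * h1 + (-(2 * x * y - 1) + ((m : ℂ) + 1) * (2 * x * y + 1)) * h2
  have hr : -(((m + 2 : ℕ) : ℂ) / ((m : ℂ) + 1)) * (1 / (4 * x))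
      = -((m : ℂ) + 2) / (((m : ℂ) + 1) * (4 * x)) := by
    push_cast
    field_simp
  rw [hr, eq_div_iff (mul_ne_zero hm (mul_ne_zero (by norm_num) hx))]
  exact key
end

section
/- Let n ≥ 2 and let f : ℂ² → ℂ be given by f(x,y) = x^{n-1} + x y² + y. Then f has exactly n critical points, and f takes pairwise distinct values at these n critical points (so f has n distinct critical values). -/
/-- For `n ≥ 2` and `f(x,y) = x^(n-1) + x*y^2 + y` on `ℂ²`, the set of critical
points of `f` (points where both partial derivatives `(n-1)x^(n-2) + y^2` and
`2xy + 1` vanish) has exactly `n` elements, and `f` takes pairwise distinct values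
at these critical points, i.e. `f` is injective on the critical set. -/
theorem Dn_perturbation_has_n_distinct_critical_values (n : ℕ) (hn : 2 ≤ n) :
    ({p : ℂ × ℂ | (n - 1 : ℂ) * p.1 ^ (n - 2) + p.2 ^ 2 = 0 ∧
        2 * p.1 * p.2 + 1 = 0}).ncard = n ∧
    Set.InjOn (fun p : ℂ × ℂ => p.1 ^ (n - 1) + p.1 * p.2 ^ 2 + p.2)
      {p : ℂ × ℂ | (n - 1 : ℂ) * p.1 ^ (n - 2) + p.2 ^ 2 = 0 ∧
        2 * p.1 * p.2 + 1 = 0} := by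
  obtain ⟨m, rfl⟩ : ∃ m, n = m + 2 := ⟨n - 2, by omega⟩
  have e1 : m + 2 - 2 = m := by omega
  have e2 : m + 2 - 1 = m + 1 := by omega
  have hm1 : (m : ℂ) + 1 ≠ 0 := by exact_mod_cast Nat.succ_ne_zero m
  have hm2 : (m : ℂ) + 2 ≠ 0 := by exact_mod_cast Nat.succ_ne_zero (m + 1)
  rw [e1, e2]
  have ec : (((m + 2 : ℕ) : ℂ) - 1) = (m : ℂ) + 1 := by push_cast; ring
  rw [ec]
  constructor
  · set c : ℂ := -1 / (4 * ((m : ℂ) + 1)) with hc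
    have hc0 : c ≠ 0 := by
      rw [hc]
      exact div_ne_zero (by norm_num) (mul_ne_zero (by norm_num) hm1)
    have hcm : 4 * ((m : ℂ) + 1) * c = -1 := by
      rw [hc]; field_simp
    have hset : {p : ℂ × ℂ | ((m : ℂ) + 1) * p.1 ^ m + p.2 ^ 2 = 0 ∧ 2 * p.1 * p.2 + 1 = 0}
        = (fun x : ℂ => (x, -1 / (2 * x))) ''
          ((Polynomial.nthRoots (m + 2) c).toFinset : Set ℂ) := by
      ext ⟨x, y⟩
      simp only [Set.mem_setOf_eq, Set.mem_image, Finset.mem_coe, Multiset.mem_toFinset,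
        Polynomial.mem_nthRoots (show 0 < m + 2 by omega), Prod.mk.injEq]
      constructor
      · rintro ⟨h1, h2⟩
        have hx : x ≠ 0 := by
          rintro rfl
          simp at h2
        refine ⟨x, ?_, rfl, ?_⟩
        · have h4 : 4 * ((m : ℂ) + 1) ≠ 0 := mul_ne_zero (by norm_num) hm1
          apply mul_left_cancel₀ h4
          rw [hcm, pow_add]
          linear_combination 4 * x ^ 2 * h1 - (2 * x * y - 1) * h2
        · field_simp
          linear_combination -h2
      · rintro ⟨z, hz, rfl, rfl⟩
        have hx : z ≠ 0 := by
          rintro rfl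
          rw [zero_pow (by omega)] at hz
          exact hc0 hz.symm
        constructor
        · rw [← hz, pow_add] at hcm
          field_simp
          linear_combination hcm
        · field_simp
          ring
    have hinj : Function.Injective (fun x : ℂ => (x, -1 / (2 * x))) := by
      intro a b h
      exact (Prod.mk.inj h).1
    rw [hset, Set.ncard_image_of_injective _ hinj, Set.ncard_coe_finset]
    have hp := Complex.isPrimitiveRoot_exp (m + 2) (by omega)
    rw [Multiset.toFinset_card_of_nodup (hp.nthRoots_nodup hc0), hp.card_nthRoots, if_pos]
    exact IsAlgClosed.exists_pow_nat_eq c (by omega)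
  · have key : ∀ x y : ℂ, ((m : ℂ) + 1) * x ^ m + y ^ 2 = 0 → 2 * x * y + 1 = 0 →
        ((m : ℂ) + 1) * (x ^ (m + 1) + x * y ^ 2 + y) = ((m : ℂ) + 2) * (y / 2) := by
      intro x y h1 h2
      rw [pow_succ]
      linear_combination x * h1 + (m : ℂ) * y / 2 * h2
    rintro ⟨x, y⟩ ⟨h1, h2⟩ ⟨z, w⟩ ⟨h3, h4⟩ h
    simp only at h1 h2 h3 h4 h
    have k1 := key x y h1 h2
    have k2 := key z w h3 h4
    rw [h, k2] at k1
    have hyw : y = w := by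
      have := mul_left_cancel₀ hm2 k1
      linear_combination -2 * this
    subst hyw
    have hy : y ≠ 0 := by
      rintro rfl
      simp at h2
    have hxz : x = z := by
      apply mul_right_cancel₀ hy
      linear_combination (h2 - h4) / 2
    rw [hxz]
end

section
/- Let n ≥ 2 and let R = ℂ[x,y]/(x^{n-1}y + y²). Then the annihilator of y in R is the principal ideal generated by x^{n-1} + y, and the annihilator of x^{n-1} + y in R is the principal ideal generated by y. Equivalently, the 2-periodic sequence ⋯ → R →^{x^{n-1}+y} R →^{y} R → R/(y) → 0 is exact. -/
open MvPolynomial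

theorem ann_aux {A : Type*} [CommRing A] [IsDomain A] (a b W : A) (hW : W = a * b) (ha : a ≠ 0)
    (r : A ⧸ Ideal.span {W}) :
    Ideal.Quotient.mk (Ideal.span {W}) a * r = 0 ↔
      r ∈ Ideal.span {Ideal.Quotient.mk (Ideal.span {W}) b} := by
  obtain ⟨p, rfl⟩ := Ideal.Quotient.mk_surjective r
  rw [Ideal.mem_span_singleton']
  constructor
  · intro h
    rw [← map_mul, Ideal.Quotient.eq_zero_iff_mem, Ideal.mem_span_singleton'] at h
    obtain ⟨c, hc⟩ := h
    refine ⟨Ideal.Quotient.mk _ c, ?_⟩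
    rw [← map_mul]
    congr 1
    apply mul_left_cancel₀ ha
    rw [← hc, hW]
    ring
  · rintro ⟨c, hc⟩
    have h0 : Ideal.Quotient.mk (Ideal.span {W}) W = 0 :=
      Ideal.Quotient.eq_zero_iff_mem.2 (Ideal.mem_span_singleton_self W)
    have h1 : Ideal.Quotient.mk (Ideal.span {W}) a * Ideal.Quotient.mk (Ideal.span {W}) b = 0 := by
      rw [← map_mul, ← hW, h0]
    rw [← hc, mul_left_comm, h1, mul_zero]

/-- For `n ≥ 2` and `R = ℂ[x,y]/(x^(n-1) y + y²)`, the annihilator of `y` in `R` is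
the principal ideal generated by `x^(n-1) + y`, and the annihilator of `x^(n-1) + y`
is the principal ideal generated by `y`; i.e. the 2-periodic sequence
`⋯ → R → R → R → R/(y) → 0` with maps alternating multiplication by `x^(n-1)+y`
and by `y` is exact. -/
theorem two_periodic_resolution_Dn_transpose (n : ℕ) (hn : 2 ≤ n) :
    let W : MvPolynomial (Fin 2) ℂ := X 0 ^ (n - 1) * X 1 + X 1 ^ 2
    let R := MvPolynomial (Fin 2) ℂ ⧸ Ideal.span {W}
    let x : R := Ideal.Quotient.mk _ (X 0)
    let y : R := Ideal.Quotient.mk _ (X 1)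
    (∀ r : R, y * r = 0 ↔ r ∈ Ideal.span {x ^ (n - 1) + y}) ∧
    (∀ r : R, (x ^ (n - 1) + y) * r = 0 ↔ r ∈ Ideal.span {y}) := by
  intro W R x y
  have hb : (X 0 ^ (n - 1) + X 1 : MvPolynomial (Fin 2) ℂ) ≠ 0 := by
    intro h
    have := congrArg (MvPolynomial.eval ![0, 1]) h
    simp [show n - 1 ≠ 0 by omega] at this
  have hxy : x ^ (n - 1) + y = Ideal.Quotient.mk (Ideal.span {W}) (X 0 ^ (n - 1) + X 1) := by
    rw [map_add, map_pow]
  rw [hxy]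
  exact ⟨fun r => ann_aux _ _ W (by simp only [W]; ring) (X_ne_zero 1) r,
    fun r => ann_aux _ _ W (by simp only [W]; ring) hb r⟩
end

section
/- Let n ≥ 2 and let R = ℂ[x,y]/(x^{n-1}y + y²). Let M̄ : R² → R² be the R-linear map given by the matrix [[-y, x^{n-2}y], [x, y]] (entries reduced mod W), and let ε : R² → R be the map (r,s) ↦ x·r + y·s. Then ker ε = range M̄ and ker M̄ = range M̄. Equivalently, the 2-periodic sequence ⋯ → R² →^{M̄} R² →^{M̄} R² →^{ε} R → R/(x,y) → 0 is exact, giving a free resolution of the residue field R/(x,y). -/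
open MvPolynomial

theorem koszul_aux (p q : MvPolynomial (Fin 2) ℂ) (h : X 0 * p + X 1 * q = 0) :
    ∃ a, p = -X 1 * a ∧ q = X 0 * a := by
  have hp : Prime (X 0 : MvPolynomial (Fin 2) ℂ) := MvPolynomial.X_prime
  have hd : (X 0 : MvPolynomial (Fin 2) ℂ) ∣ X 1 * q := ⟨-p, by linear_combination h⟩
  rcases hp.dvd_or_dvd hd with h1 | ⟨a, rfl⟩
  · rw [MvPolynomial.X_dvd_X] at h1
    simp at h1
  · refine ⟨a, ?_, rfl⟩
    apply mul_left_cancel₀ hp.ne_zero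
    linear_combination h

/-- For `n ≥ 2` and `R = ℂ[x,y]/(x^(n-1) y + y²)`, let `M̄ : R² → R²` be given by the
matrix `[[-y, x^(n-2) y], [x, y]]` and `ε : R² → R` by `(r,s) ↦ x r + y s`.  Then
`ker ε = range M̄` and `ker M̄ = range M̄`; moreover `range ε = (x,y)`, so the
2-periodic sequence `⋯ → R² → R² → R² → R → R/(x,y) → 0` is exact, giving a free
resolution of the residue field. -/
theorem two_periodic_resolution_residue_field_Dn_transpose (n : ℕ) (hn : 2 ≤ n) :
    let W : MvPolynomial (Fin 2) ℂ := X 0 ^ (n - 1) * X 1 + X 1 ^ 2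
    let R := MvPolynomial (Fin 2) ℂ ⧸ Ideal.span {W}
    let x : R := Ideal.Quotient.mk _ (X 0)
    let y : R := Ideal.Quotient.mk _ (X 1)
    let Mbar : (Fin 2 → R) →ₗ[R] (Fin 2 → R) :=
      Matrix.mulVecLin !![-y, x ^ (n - 2) * y; x, y]
    let ε : (Fin 2 → R) →ₗ[R] R :=
      x • LinearMap.proj 0 + y • LinearMap.proj 1
    LinearMap.ker ε = LinearMap.range Mbar ∧
    LinearMap.ker Mbar = LinearMap.range Mbar ∧
    (∀ r : R, r ∈ LinearMap.range ε ↔ r ∈ Ideal.span {x, y}) := by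
  intro W R x y Mbar ε
  obtain ⟨m, rfl⟩ : ∃ m, n = m + 2 := ⟨n - 2, by omega⟩
  have e1 : m + 2 - 1 = m + 1 := by omega
  have e2 : m + 2 - 2 = m := by omega
  have hM0 : ∀ v : Fin 2 → R, Mbar v 0 = -y * v 0 + x ^ m * y * v 1 := by
    intro v
    simp [Mbar, Matrix.mulVec, dotProduct, Fin.sum_univ_two]
  have hM1 : ∀ v : Fin 2 → R, Mbar v 1 = x * v 0 + y * v 1 := by
    intro v
    simp [Mbar, Matrix.mulVec, dotProduct, Fin.sum_univ_two]
  have hε : ∀ v : Fin 2 → R, ε v = x * v 0 + y * v 1 := by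
    intro v
    simp [ε]
  have hW : x ^ (m + 1) * y + y ^ 2 = 0 := by
    have h : (Ideal.Quotient.mk (Ideal.span {W}) W) = 0 :=
      Ideal.Quotient.eq_zero_iff_mem.mpr (Ideal.mem_span_singleton_self W)
    simpa only [W, e1, map_add, map_mul, map_pow] using h
  have key : ∀ v : Fin 2 → R, x * v 0 + y * v 1 = 0 → v ∈ LinearMap.range Mbar := by
    intro v hv
    obtain ⟨r, hr⟩ := Ideal.Quotient.mk_surjective (v 0)
    obtain ⟨s, hs⟩ := Ideal.Quotient.mk_surjective (v 1)
    have h : X 0 * r + X 1 * s ∈ Ideal.span {W} := by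
      rw [← Ideal.Quotient.eq_zero_iff_mem, map_add, map_mul, map_mul, hr, hs]
      exact hv
    obtain ⟨c, hc⟩ := Ideal.mem_span_singleton.mp h
    simp only [W, e1] at hc
    obtain ⟨a, ha, hb⟩ := koszul_aux (r - X 0 ^ m * X 1 * c) (s - X 1 * c)
      (by linear_combination hc)
    have hr' : r = -X 1 * a + X 0 ^ m * X 1 * c := by linear_combination ha
    have hs' : s = X 0 * a + X 1 * c := by linear_combination hb
    refine ⟨![Ideal.Quotient.mk _ a, Ideal.Quotient.mk _ c], ?_⟩
    funext i
    fin_cases i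
    · change Mbar _ 0 = v 0
      rw [hM0, ← hr, hr']
      simp only [x, y, Matrix.cons_val_zero, Matrix.cons_val_one, map_add, map_mul, map_neg, map_pow]
    · change Mbar _ 1 = v 1
      rw [hM1, ← hs, hs']
      simp [x, y]
  refine ⟨?_, ?_, ?_⟩
  · ext v
    refine ⟨fun h => key v ((hε v).symm.trans h), ?_⟩
    rintro ⟨w, rfl⟩
    rw [LinearMap.mem_ker, hε, hM0, hM1]
    linear_combination (w 1) * hW
  · ext v
    refine ⟨fun h => key v ?_, ?_⟩
    · rw [← hM1, LinearMap.mem_ker.mp h]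
      rfl
    · rintro ⟨w, rfl⟩
      rw [LinearMap.mem_ker]
      funext i
      fin_cases i
      · change Mbar _ 0 = 0
        rw [hM0, hM0, hM1]
        linear_combination (w 0) * hW
      · change Mbar _ 1 = 0
        rw [hM1, hM0, hM1]
        linear_combination (w 1) * hW
  · intro r
    rw [Ideal.mem_span_pair]
    constructor
    · rintro ⟨v, rfl⟩
      exact ⟨v 0, v 1, by rw [hε]; ring⟩
    · rintro ⟨a, b, rfl⟩
      refine ⟨![a, b], ?_⟩
      rw [hε]
      simp only [Matrix.cons_val_zero, Matrix.cons_val_one]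
      ring
end

section
/- Let n ≥ 2 and let R = ℂ[x,y]/(x^{n-1}y + y²). Then multiplication by x is injective on R (x is a nonzerodivisor), and the quotient R/(x) is isomorphic as a ℂ-algebra to ℂ[Y]/(Y²). In particular the sequence 0 → R →^{x} R → R/(x, y²) → 0 is exact. -/
open MvPolynomial

/-- For `n ≥ 2` and `R = ℂ[x,y]/(x^(n-1) y + y²)`, multiplication by `x` is
injective on `R`, the quotient `R/(x)` is isomorphic as a `ℂ`-algebra to
`ℂ[Y]/(Y²)`, and the ideals `(x)` and `(x, y²)` of `R` coincide; in particular the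
sequence `0 → R → R → R/(x, y²) → 0` (first map multiplication by `x`) is exact. -/
theorem x_regular_on_Dn_transpose_ring (n : ℕ) (hn : 2 ≤ n) :
    let W : MvPolynomial (Fin 2) ℂ := X 0 ^ (n - 1) * X 1 + X 1 ^ 2
    let R := MvPolynomial (Fin 2) ℂ ⧸ Ideal.span {W}
    let x : R := Ideal.Quotient.mk _ (X 0)
    let y : R := Ideal.Quotient.mk _ (X 1)
    Function.Injective (fun r : R => x * r) ∧
    Nonempty ((R ⧸ Ideal.span {x}) ≃ₐ[ℂ]
      (Polynomial ℂ ⧸ Ideal.span {(Polynomial.X : Polynomial ℂ) ^ 2})) ∧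
    Ideal.span {x} = Ideal.span {x, y ^ 2} := by
  obtain ⟨m, rfl⟩ : ∃ m, n = m + 2 := ⟨n - 2, by omega⟩
  intro W R x y
  have hW : W = X 0 ^ (m + 1) * X 1 + X 1 ^ 2 := rfl
  have hy : y ^ 2 = x * (- (x ^ m * y)) := by
    have h : (Ideal.Quotient.mk (Ideal.span {W}) W) = 0 :=
      Ideal.Quotient.eq_zero_iff_mem.2 (Ideal.mem_span_singleton_self W)
    have h2 : x ^ (m + 1) * y + y ^ 2 = 0 := by
      refine Eq.trans ?_ h
      change _ = Ideal.Quotient.mk (Ideal.span {W}) (X 0 ^ (m + 1) * X 1 + X 1 ^ 2)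
      simp only [map_add, map_mul, map_pow, x, y]
    linear_combination h2
  refine ⟨?_, ?_, ?_⟩
  · have key : ∀ r : R, x * r = 0 → r = 0 := by
      intro r hr
      obtain ⟨f, rfl⟩ := Ideal.Quotient.mk_surjective r
      have hr' : Ideal.Quotient.mk (Ideal.span {W}) (X 0 * f) = 0 := by
        rw [map_mul]; exact hr
      rw [Ideal.Quotient.eq_zero_iff_mem, Ideal.mem_span_singleton] at hr'
      obtain ⟨g, hg⟩ := hr'
      have hp : Prime (X 0 : MvPolynomial (Fin 2) ℂ) := MvPolynomial.X_prime
      rcases hp.dvd_or_dvd (⟨f, hg.symm⟩ : (X 0 : MvPolynomial (Fin 2) ℂ) ∣ W * g) with h | h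
      · exfalso
        obtain ⟨k, hk⟩ := h
        have := congrArg (MvPolynomial.eval (![0, 1] : Fin 2 → ℂ)) hk
        simp [hW] at this
      · obtain ⟨k, rfl⟩ := h
        have : f = W * k := mul_left_cancel₀ hp.ne_zero (by rw [hg]; ring)
        exact Ideal.Quotient.eq_zero_iff_mem.2 (Ideal.mem_span_singleton.2 ⟨k, this⟩)
    intro a b hab
    have h : x * a = x * b := hab
    exact sub_eq_zero.1 (key _ (by rw [mul_sub, h, sub_self]))
  · let S := Polynomial ℂ ⧸ Ideal.span {(Polynomial.X : Polynomial ℂ) ^ 2}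
    let t : S := Ideal.Quotient.mk _ Polynomial.X
    have ht : t ^ 2 = 0 := by
      have : Ideal.Quotient.mk (Ideal.span {(Polynomial.X : Polynomial ℂ) ^ 2})
          (Polynomial.X ^ 2) = 0 :=
        Ideal.Quotient.eq_zero_iff_mem.2 (Ideal.mem_span_singleton_self _)
      rw [← this, map_pow]
    let f0 : MvPolynomial (Fin 2) ℂ →ₐ[ℂ] S := aeval ![0, t]
    have hf0 : ∀ a ∈ Ideal.span {W}, f0 a = 0 := by
      intro a ha
      obtain ⟨k, rfl⟩ := Ideal.mem_span_singleton.1 ha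
      have : f0 W = 0 := by simp [f0, hW, ht]
      rw [map_mul, this, zero_mul]
    let f1 : R →ₐ[ℂ] S := Ideal.Quotient.liftₐ (Ideal.span {W}) f0 hf0
    have f1x : f1 x = 0 := by
      change f0 (X 0) = 0
      simp [f0]
    have f1y : f1 y = t := by
      change f0 (X 1) = t
      simp [f0]
    have hf1 : ∀ a ∈ Ideal.span {x}, f1 a = 0 := by
      intro a ha
      obtain ⟨k, rfl⟩ := Ideal.mem_span_singleton.1 ha
      rw [map_mul, f1x, zero_mul]
    let f : (R ⧸ Ideal.span {x}) →ₐ[ℂ] S := Ideal.Quotient.liftₐ (Ideal.span {x}) f1 hf1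
    let q : R →ₐ[ℂ] (R ⧸ Ideal.span {x}) := Ideal.Quotient.mkₐ ℂ (Ideal.span {x})
    have qx : q x = 0 := Ideal.Quotient.eq_zero_iff_mem.2 (Ideal.mem_span_singleton_self x)
    let g0 : Polynomial ℂ →ₐ[ℂ] (R ⧸ Ideal.span {x}) := Polynomial.aeval (q y)
    have hg0 : ∀ a ∈ Ideal.span {(Polynomial.X : Polynomial ℂ) ^ 2}, g0 a = 0 := by
      intro a ha
      obtain ⟨k, rfl⟩ := Ideal.mem_span_singleton.1 ha
      have h1 : g0 Polynomial.X = q y := Polynomial.aeval_X _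
      have h2 : q (y ^ 2) = 0 :=
        Ideal.Quotient.eq_zero_iff_mem.2 (Ideal.mem_span_singleton.2 ⟨_, hy⟩)
      rw [map_mul, map_pow, h1, ← map_pow, h2]
      exact zero_mul (g0 k)
    let g : S →ₐ[ℂ] (R ⧸ Ideal.span {x}) := Ideal.Quotient.liftₐ _ g0 hg0
    have gt : g t = q y := by
      change g0 Polynomial.X = q y
      exact Polynomial.aeval_X _
    refine ⟨AlgEquiv.ofAlgHom f g ?_ ?_⟩
    · apply Ideal.Quotient.algHom_ext
      apply Polynomial.algHom_ext
      change f (g t) = t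
      rw [gt]
      exact f1y
    · apply Ideal.Quotient.algHom_ext
      apply Ideal.Quotient.algHom_ext
      apply MvPolynomial.algHom_ext
      intro i
      fin_cases i
      · change g (f1 x) = q x
        rw [f1x, qx, map_zero]
      · change g (f1 y) = q y
        rw [f1y, gt]
  · apply le_antisymm
    · exact Ideal.span_mono (by simp)
    · rw [Ideal.span_le]
      rintro a (rfl | ha)
      · exact Ideal.mem_span_singleton_self _
      · rw [Set.mem_singleton_iff] at ha
        rw [ha]
        exact Ideal.mem_span_singleton.2 ⟨_, hy⟩
end

section
/- Let n ≥ 2 and let R = ℂ[x,y]/(x^{n-1}y + y²). In R, the principal ideals (y) and (x^{n-1}+y) satisfy: (y) ∩ (x^{n-1}+y) = 0 and (y) + (x^{n-1}+y) = (x^{n-1}, y). Equivalently, the sequence 0 → R → R/(y) ⊕ R/(x^{n-1}+y) → R/(x^{n-1}, y) → 0, with first map the pair of quotient projections and second map the difference of projections, is exact. -/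
open MvPolynomial

/-- For `n ≥ 2` and `R = ℂ[x,y]/(x^(n-1) y + y²)`, the principal ideals `(y)` and
`(x^(n-1)+y)` of `R` satisfy `(y) ∩ (x^(n-1)+y) = 0` and
`(y) + (x^(n-1)+y) = (x^(n-1), y)`; equivalently the Mayer-Vietoris sequence
`0 → R → R/(y) ⊕ R/(x^(n-1)+y) → R/(x^(n-1), y) → 0` is exact. -/
theorem ideal_intersection_sum_Dn_transpose (n : ℕ) (hn : 2 ≤ n) :
    let W : MvPolynomial (Fin 2) ℂ := X 0 ^ (n - 1) * X 1 + X 1 ^ 2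
    let R := MvPolynomial (Fin 2) ℂ ⧸ Ideal.span {W}
    let x : R := Ideal.Quotient.mk _ (X 0)
    let y : R := Ideal.Quotient.mk _ (X 1)
    Ideal.span {y} ⊓ Ideal.span {x ^ (n - 1) + y} = ⊥ ∧
    Ideal.span {y} ⊔ Ideal.span {x ^ (n - 1) + y} = Ideal.span {x ^ (n - 1), y} := by
  intro W R x y
  have hW : (X 0 ^ (n - 1) + X 1) * X 1 = W := by simp only [W]; ring
  constructor
  · rw [eq_bot_iff]
    intro a ha
    obtain ⟨h1, h2⟩ := Submodule.mem_inf.mp ha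
    obtain ⟨b, hb⟩ := Ideal.mem_span_singleton'.mp h1
    obtain ⟨c, hc⟩ := Ideal.mem_span_singleton'.mp h2
    obtain ⟨B, rfl⟩ := Ideal.Quotient.mk_surjective b
    obtain ⟨C, rfl⟩ := Ideal.Quotient.mk_surjective c
    have hP : Prime (X 1 : MvPolynomial (Fin 2) ℂ) := MvPolynomial.X_prime
    have hmem : B * X 1 - C * (X 0 ^ (n - 1) + X 1) ∈ Ideal.span {W} := by
      rw [← Ideal.Quotient.mk_eq_mk_iff_sub_mem]
      simp only [map_mul, map_add, map_pow]
      exact hb.trans hc.symm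
    obtain ⟨D, hD⟩ := Ideal.mem_span_singleton'.mp hmem
    have hdvd : (X 1 : MvPolynomial (Fin 2) ℂ) ∣ C * X 0 ^ (n - 1) := by
      refine ⟨B - C - D * (X 0 ^ (n - 1) + X 1), ?_⟩
      rw [← hW] at hD
      linear_combination hD
    have hC : (X 1 : MvPolynomial (Fin 2) ℂ) ∣ C := by
      rcases hP.dvd_or_dvd hdvd with h | h
      · exact h
      · have := hP.dvd_of_dvd_pow h
        simp [MvPolynomial.X_dvd_X] at this
    obtain ⟨E, rfl⟩ := hC
    have h0 : (Ideal.Quotient.mk (Ideal.span {W})) (X 1 * E * (X 0 ^ (n - 1) + X 1)) = 0 := by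
      rw [Ideal.Quotient.eq_zero_iff_mem, Ideal.mem_span_singleton']
      exact ⟨E, by rw [← hW]; ring⟩
    simp only [map_mul, map_add, map_pow] at h0
    rw [Submodule.mem_bot, ← hc]
    simp only [map_mul]
    exact h0
  · apply le_antisymm
    · rw [sup_le_iff, Ideal.span_singleton_le_iff_mem, Ideal.span_singleton_le_iff_mem]
      exact ⟨Ideal.subset_span (by simp),
        add_mem (Ideal.subset_span (by simp)) (Ideal.subset_span (by simp))⟩
    · rw [Ideal.span_le]
      have hy : y ∈ Ideal.span {y} ⊔ Ideal.span {x ^ (n - 1) + y} :=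
        Ideal.mem_sup_left (Ideal.mem_span_singleton_self _)
      have hs : x ^ (n - 1) + y ∈ Ideal.span {y} ⊔ Ideal.span {x ^ (n - 1) + y} :=
        Ideal.mem_sup_right (Ideal.mem_span_singleton_self _)
      rintro z (rfl | rfl)
      · have := sub_mem hs hy
        rwa [add_sub_cancel_right] at this
      · exact hy
end

section
/- Let n ≥ 2, let R = ℂ[x,y]/(x^{n-1}y + y²), and let 1 ≤ i ≤ n-2. Then the colon ideal ((x^{i+1}, y) : x^i) in R equals the maximal ideal (x, y). Equivalently, multiplication by x^i induces a well-defined injective map R/(x,y) → R/(x^{i+1}, y) whose image is the kernel of the natural surjection R/(x^{i+1}, y) → R/(x^i, y), so that 0 → R/(x,y) → R/(x^{i+1}, y) → R/(x^i, y) → 0 is exact. -/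
open MvPolynomial

lemma decomp_aux (p : MvPolynomial (Fin 2) ℂ) :
    ∃ a b, p = C ((aeval (![Polynomial.X, 0] : Fin 2 → Polynomial ℂ) p).coeff 0)
      + a * X 0 + b * X 1 := by
  induction p using MvPolynomial.induction_on with
  | C c => exact ⟨0, 0, by simp⟩
  | add p q hp hq =>
    obtain ⟨a, b, h⟩ := hp
    obtain ⟨a', b', h'⟩ := hq
    refine ⟨a + a', b + b', ?_⟩
    rw [map_add, Polynomial.coeff_add, C_add]
    linear_combination h + h'
  | mul_X p j hp =>
    fin_cases j
    · exact ⟨p, 0, by simp⟩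
    · exact ⟨0, p, by simp⟩

/-- For `n ≥ 2`, `R = ℂ[x,y]/(x^(n-1) y + y²)` and `1 ≤ i ≤ n-2`, the colon ideal
`((x^(i+1), y) : x^i)` equals the maximal ideal `(x, y)`: for every `r ∈ R`,
`x^i · r ∈ (x^(i+1), y)` if and only if `r ∈ (x, y)`.  Equivalently, multiplication
by `x^i` induces a well-defined injection `R/(x,y) → R/(x^(i+1), y)` whose image is
the kernel of `R/(x^(i+1), y) → R/(x^i, y)`, so that
`0 → R/(x,y) → R/(x^(i+1), y) → R/(x^i, y) → 0` is exact. -/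
theorem colon_ideal_powers_Dn_transpose (n : ℕ) (hn : 2 ≤ n) (i : ℕ)
    (hi1 : 1 ≤ i) (hi2 : i ≤ n - 2) :
    let W : MvPolynomial (Fin 2) ℂ := X 0 ^ (n - 1) * X 1 + X 1 ^ 2
    let R := MvPolynomial (Fin 2) ℂ ⧸ Ideal.span {W}
    let x : R := Ideal.Quotient.mk _ (X 0)
    let y : R := Ideal.Quotient.mk _ (X 1)
    ∀ r : R, x ^ i * r ∈ Ideal.span {x ^ (i + 1), y} ↔ r ∈ Ideal.span {x, y} := by
  intro W R x y r
  constructor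
  · intro h
    obtain ⟨p, rfl⟩ := Ideal.Quotient.mk_surjective r
    let φ : MvPolynomial (Fin 2) ℂ →+* Polynomial ℂ :=
      (aeval (![Polynomial.X, 0] : Fin 2 → Polynomial ℂ)).toRingHom
    have hφ : ∀ a ∈ Ideal.span {W}, φ a = 0 := by
      intro a ha
      obtain ⟨c, rfl⟩ := Ideal.mem_span_singleton'.mp ha
      simp [φ, W]
    let ψ : R →+* Polynomial ℂ := Ideal.Quotient.lift _ φ hφ
    have hx : ψ x = Polynomial.X := by
      change φ (X 0) = _
      simp [φ]
    have hy : ψ y = 0 := by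
      change φ (X 1) = _
      simp [φ]
    obtain ⟨a, b, hab⟩ := Ideal.mem_span_pair.mp h
    have h1 := congrArg ψ hab
    simp only [map_add, map_mul, map_pow, hx, hy, mul_zero, add_zero] at h1
    have h2 : ψ (Ideal.Quotient.mk _ p) = ψ a * Polynomial.X := by
      apply mul_left_cancel₀ (pow_ne_zero i (Polynomial.X_ne_zero (R := ℂ)))
      rw [← h1]; ring
    have h3 : (aeval (![Polynomial.X, 0] : Fin 2 → Polynomial ℂ) p).coeff 0 = 0 := by
      have : aeval (![Polynomial.X, 0] : Fin 2 → Polynomial ℂ) p = ψ a * Polynomial.X := h2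
      rw [this]; simp
    obtain ⟨u, v, huv⟩ := decomp_aux p
    rw [h3] at huv
    refine Ideal.mem_span_pair.mpr ⟨Ideal.Quotient.mk _ u, Ideal.Quotient.mk _ v, ?_⟩
    rw [huv]
    simp [x, y]
  · intro h
    obtain ⟨a, b, rfl⟩ := Ideal.mem_span_pair.mp h
    exact Ideal.mem_span_pair.mpr ⟨a, x ^ i * b, by ring⟩
end

section
/- Let n ≥ 2 and let R = ℂ[x,y]/(x^{n-1}y + y²). Then the colon ideal ((x, y²) : y) in R equals the maximal ideal (x, y). Equivalently, multiplication by y induces a well-defined injective map R/(x,y) → R/(x, y²) whose image is the kernel of the natural surjection R/(x, y²) → R/(x,y), so that 0 → R/(x,y) → R/(x, y²) → R/(x,y) → 0 is exact. -/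
open MvPolynomial

/-- For `n ≥ 2` and `R = ℂ[x,y]/(x^(n-1) y + y²)`, the colon ideal `((x, y²) : y)`
equals the maximal ideal `(x, y)`: for every `r ∈ R`, `y · r ∈ (x, y²)` if and only
if `r ∈ (x, y)`.  Equivalently, multiplication by `y` induces a well-defined
injection `R/(x,y) → R/(x, y²)` whose image is the kernel of the natural surjection
`R/(x, y²) → R/(x,y)`, so that `0 → R/(x,y) → R/(x, y²) → R/(x,y) → 0` is exact. -/
theorem colon_ideal_y_Dn_transpose (n : ℕ) (hn : 2 ≤ n) :
    let W : MvPolynomial (Fin 2) ℂ := X 0 ^ (n - 1) * X 1 + X 1 ^ 2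
    let R := MvPolynomial (Fin 2) ℂ ⧸ Ideal.span {W}
    let x : R := Ideal.Quotient.mk _ (X 0)
    let y : R := Ideal.Quotient.mk _ (X 1)
    ∀ r : R, y * r ∈ Ideal.span {x, y ^ 2} ↔ r ∈ Ideal.span {x, y} := by
  intro W R x y r
  obtain ⟨p, rfl⟩ := Ideal.Quotient.mk_surjective r
  let f : MvPolynomial (Fin 2) ℂ →ₐ[ℂ] DualNumber ℂ := aeval ![0, DualNumber.eps]
  have f0 : f (X 0) = 0 := by simp [f]
  have f1 : f (X 1) = DualNumber.eps := by simp [f]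
  have e2 : (DualNumber.eps : DualNumber ℂ) ^ 2 = 0 := by
    rw [pow_two]; exact DualNumber.eps_mul_eps
  have hW : ∀ a ∈ Ideal.span {W}, (f : MvPolynomial (Fin 2) ℂ →+* DualNumber ℂ) a = 0 := by
    intro a ha
    obtain ⟨b, rfl⟩ := Ideal.mem_span_singleton.1 ha
    have h0 : n - 1 ≠ 0 := by omega
    have : f W = 0 := by simp only [W, map_add, map_mul, map_pow, f0, f1, e2, zero_pow h0]; simp
    simp [this]
  let g : R →+* DualNumber ℂ := Ideal.Quotient.lift _ (f : MvPolynomial (Fin 2) ℂ →+* DualNumber ℂ) hW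
  have gm : ∀ q, g (Ideal.Quotient.mk _ q) = f q := fun q => Ideal.Quotient.lift_mk _ _ _
  constructor
  · intro h
    obtain ⟨a, b, hab⟩ := Ideal.mem_span_pair.1 h
    have h1 := congrArg g hab
    have gx : g x = 0 := (gm _).trans f0
    have gy : g y = DualNumber.eps := (gm _).trans f1
    rw [map_add, map_mul, map_mul, map_mul, map_pow, gx, gy, e2, gm] at h1
    have h2 : (f p).fst = 0 := by
      have := congrArg TrivSqZeroExt.snd h1
      simpa using this.symm
    let J : Ideal R := Ideal.span {x, y}
    let u : MvPolynomial (Fin 2) ℂ →ₐ[ℂ] (R ⧸ J) :=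
      (Ideal.Quotient.mkₐ ℂ J).comp (Ideal.Quotient.mkₐ ℂ (Ideal.span {W}))
    let v : MvPolynomial (Fin 2) ℂ →ₐ[ℂ] (R ⧸ J) :=
      (Algebra.ofId ℂ (R ⧸ J)).comp ((TrivSqZeroExt.fstHom ℂ ℂ ℂ).comp f)
    have huv : u = v := by
      apply MvPolynomial.algHom_ext
      intro i
      have hx : Ideal.Quotient.mk J x = 0 :=
        Ideal.Quotient.eq_zero_iff_mem.2 (Ideal.subset_span (by simp))
      have hy : Ideal.Quotient.mk J y = 0 :=
        Ideal.Quotient.eq_zero_iff_mem.2 (Ideal.subset_span (by simp))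
      fin_cases i
      · have : v (X 0) = 0 := by simp [v, f0]
        exact hx.trans this.symm
      · have : v (X 1) = 0 := by simp [v, f1]
        exact hy.trans this.symm
    have h3 : v p = 0 := by simp [v, h2]
    rw [← huv] at h3
    exact Ideal.Quotient.eq_zero_iff_mem.1 h3
  · intro h
    obtain ⟨a, b, hab⟩ := Ideal.mem_span_pair.1 h
    rw [← hab]
    exact Ideal.mem_span_pair.2 ⟨y * a, b, by ring⟩
end

section
/- Let A = (a_{ij}) be an n×n integer matrix invertible over ℚ, and write A^{-1} = (φ_i^{(k)}), with columns φ^{(k)}. For k = 1,…,n set ρ_k = (exp(2π√-1 φ₁^{(k)}), …, exp(2π√-1 φₙ^{(k)})) ∈ (ℂˣ)ⁿ. Then the group G_max = { (α₁,…,αₙ) ∈ (ℂˣ)ⁿ : α₁^{a_{i1}} ⋯ αₙ^{a_{in}} = 1 for all i = 1,…,n } equals the subgroup of (ℂˣ)ⁿ generated by ρ₁, …, ρₙ. In particular each ρ_k lies in G_max and every maximal diagonal symmetry is a product of powers of the ρ_k. -/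
open Matrix BigOperators Real

/-- Let `A = (a_{ij})` be an `n×n` integer matrix invertible over `ℚ`, and write
`A⁻¹ = (φ_i^{(k)})`.  For `k = 1,…,n` set
`ρ_k = (exp(2π√-1 φ₁^{(k)}), …, exp(2π√-1 φₙ^{(k)})) ∈ (ℂˣ)ⁿ`.  Then the group
`G_max = {(α₁,…,αₙ) ∈ (ℂˣ)ⁿ : ∏_j α_j^{a_{ij}} = 1 for all i}` of maximal diagonal
symmetries equals the subgroup of `(ℂˣ)ⁿ` generated by `ρ₁,…,ρₙ`. -/
theorem maximal_diagonal_symmetries_generated (n : ℕ)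
    (A : Matrix (Fin n) (Fin n) ℤ)
    (hA : IsUnit (A.map ((↑) : ℤ → ℚ)).det)
    (φ : Matrix (Fin n) (Fin n) ℚ)
    (hφ : φ = (A.map ((↑) : ℤ → ℚ))⁻¹)
    (ρ : Fin n → (Fin n → ℂˣ))
    (hρ : ∀ k i, (ρ k i : ℂ) = Complex.exp (2 * π * Complex.I * (φ i k : ℂ))) :
    {α : Fin n → ℂˣ | ∀ i, ∏ j, (α j : ℂ) ^ (A i j) = 1} =
      ↑(Subgroup.closure (Set.range ρ)) := by
  have hAφ : ∀ i k, ∑ j, (A i j : ℂ) * (φ j k : ℂ) = if i = k then 1 else 0 := by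
    intro i k
    have h := Matrix.mul_nonsing_inv _ hA
    rw [← hφ] at h
    have h2 := congrFun (congrFun h i) k
    rw [Matrix.mul_apply, Matrix.one_apply] at h2
    simp only [Matrix.map_apply] at h2
    have h3 := congrArg (fun q : ℚ => (q : ℂ)) h2
    push_cast at h3
    rw [h3]; split_ifs <;> simp
  have hφA : ∀ i k, ∑ j, (φ i j : ℂ) * (A j k : ℂ) = if i = k then 1 else 0 := by
    intro i k
    have h := Matrix.nonsing_inv_mul _ hA
    rw [← hφ] at h
    have h2 := congrFun (congrFun h i) k
    rw [Matrix.mul_apply, Matrix.one_apply] at h2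
    simp only [Matrix.map_apply] at h2
    have h3 := congrArg (fun q : ℚ => (q : ℂ)) h2
    push_cast at h3
    rw [h3]; split_ifs <;> simp
  apply Set.Subset.antisymm
  · intro α hα
    simp only [Set.mem_ofPred_eq] at hα
    have hm : ∀ i, ∃ m : ℤ, ∑ j, (A i j : ℂ) * Complex.log (α j) = m * (2 * π * Complex.I) := by
      intro i
      rw [← Complex.exp_eq_one_iff, Complex.exp_sum, ← hα i]
      refine Finset.prod_congr rfl fun j _ => ?_
      rw [Complex.exp_int_mul, Complex.exp_log (α j).ne_zero]
    choose m hm using hm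
    have key : α = ∏ k, ρ k ^ m k := by
      funext j
      apply Units.ext
      have h1 : Complex.log (α j) = ∑ k, (m k : ℂ) * (2 * π * Complex.I * (φ j k : ℂ)) := by
        calc Complex.log (α j) = ∑ l, (∑ k, (φ j k : ℂ) * (A k l : ℂ)) * Complex.log (α l) := by
              simp [hφA]
          _ = ∑ k, (φ j k : ℂ) * ∑ l, (A k l : ℂ) * Complex.log (α l) := by
              simp only [Finset.sum_mul, Finset.mul_sum]
              rw [Finset.sum_comm]
              simp only [mul_assoc]
          _ = _ := by
              refine Finset.sum_congr rfl fun k _ => ?_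
              rw [hm]; ring
      rw [← Complex.exp_log (α j).ne_zero, h1, Complex.exp_sum, Finset.prod_apply, Units.coe_prod]
      refine Finset.prod_congr rfl fun k _ => ?_
      rw [Complex.exp_int_mul, ← hρ, Pi.pow_apply, Units.val_zpow_eq_zpow_val]
    rw [key]
    exact Subgroup.prod_mem _ fun k _ =>
      Subgroup.zpow_mem _ (Subgroup.subset_closure (Set.mem_range_self k)) _
  · intro α hα
    simp only [Set.mem_ofPred_eq]
    intro i
    have hα' : α ∈ Subgroup.closure (Set.range ρ) := hα
    clear hα
    induction hα' using Subgroup.closure_induction with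
    | mem x hx =>
      obtain ⟨k, rfl⟩ := hx
      have : ∀ j, (ρ k j : ℂ) ^ (A i j) =
          Complex.exp (2 * π * Complex.I * ((A i j : ℂ) * (φ j k : ℂ))) := by
        intro j
        rw [hρ, ← Complex.exp_int_mul]
        congr 1; ring
      simp only [this]
      rw [← Complex.exp_sum, ← Finset.mul_sum, hAφ]
      split_ifs <;> simp [Complex.exp_two_pi_mul_I]
    | one => simp
    | mul x y _ _ hx hy =>
      simp only [Pi.mul_apply, Units.val_mul, mul_zpow, Finset.prod_mul_distrib, hx, hy, mul_one]
    | inv x _ hx =>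
      simp only [Pi.inv_apply, Units.val_inv_eq_inv_val, _root_.inv_zpow, Finset.prod_inv_distrib, hx,
        inv_one]
end
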